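/- Every finite-dimensional Novikov algebra over a field F is mixing; consequently, every finite-dimensional Novikov algebra A of dimension d ≥ 2 satisfies l(A) ≤ d. -/

import Mathlib

/-!
Framework: length of finite-dimensional not necessarily associative,
not necessarily unital algebras (non-unital convention: `L_0(S) = 0`).
The multiplication of the algebra is passed explicitly as a binary
operation `μ`, so that the same definitions apply to an algebra, to its
commutator algebra, to a Lie bracket, etc.
-/

open Submodule Module

/-- `IsWord μ S k w`: `w` is a product of `k` elements of `S` (with respect to the
multiplication `μ`) with some placement of parentheses. -/
inductive IsWord {A : Type*} (μ : A → A → A) (S : Set A) : ℕ → A → Prop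
  | base {a : A} (ha : a ∈ S) : IsWord μ S 1 a
  | mul {m n : ℕ} {a b : A} (ha : IsWord μ S m a) (hb : IsWord μ S n b) :
      IsWord μ S (m + n) (μ a b)

/-- The multiplication of an algebra, as a plain binary operation. -/
def amul (A : Type*) [Mul A] : A → A → A := fun a b => a * b

section
variable (F : Type*) {A : Type*} [Field F] [AddCommGroup A] [Module F A]

/-- `L_i(S)`: the linear span of all words in `S` of length at most `i`
(non-unital convention, so `L_0(S) = 0`). -/
def Lset (μ : A → A → A) (S : Set A) (i : ℕ) : Submodule F A :=
  Submodule.span F {a | ∃ k, k ≤ i ∧ IsWord μ S k a}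

/-- `S` generates the algebra, i.e. the span of all words in `S` is everything. -/
def Generates (μ : A → A → A) (S : Set A) : Prop :=
  Submodule.span F {a | ∃ k, IsWord μ S k a} = ⊤

/-- `l(S)`: the length of a generating set `S`, the least `k` with `L_k(S) = A`. -/
noncomputable def lenSet (μ : A → A → A) (S : Set A) : ℕ :=
  sInf {k | Lset F μ S k = ⊤}

/-- An irreducible word of length `k` in `S`. -/
def IrredWord (μ : A → A → A) (S : Set A) (k : ℕ) (w : A) : Prop :=
  IsWord μ S k w ∧ ∀ m, m < k → w ∉ Lset F μ S m

end

section
variable {A : Type*}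

/-- The set `P(x,y,z)` of monomials. -/
def Pset (μ : A → A → A) (x y z : A) : Set A :=
  {μ (μ x z) y, μ (μ z x) y, μ (μ y z) x, μ (μ z y) x,
   μ x (μ z y), μ x (μ y z), μ y (μ x z), μ y (μ z x),
   μ x y, μ y x, μ x z, μ z x, μ y z, μ z y, x, y, z}

/-- The set `Q_l(x,y,z)` of monomials. -/
def Qlset (μ : A → A → A) (x y z : A) : Set A :=
  {μ x (μ z y), μ x (μ y z), μ y (μ x z), μ y (μ z x),
   μ x y, μ y x, μ x z, μ z x, μ y z, μ z y, x, y, z}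

/-- The set `Q_r(x,y,z)` of monomials. -/
def Qrset (μ : A → A → A) (x y z : A) : Set A :=
  {μ (μ x z) y, μ (μ z x) y, μ (μ y z) x, μ (μ z y) x,
   μ x y, μ y x, μ x z, μ z x, μ y z, μ z y, x, y, z}

end

section
variable (F : Type*) {A : Type*} [Field F] [AddCommGroup A] [Module F A]

/-- A mixing algebra: `(xy)z` and `z(xy)` lie in the span of `P(x,y,z)`. -/
def IsMixing (μ : A → A → A) : Prop :=
  ∀ x y z : A, μ (μ x y) z ∈ Submodule.span F (Pset μ x y z) ∧
    μ z (μ x y) ∈ Submodule.span F (Pset μ x y z)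

/-- A sliding algebra: either `z(xy)` always lies in the span of `Q_r(x,y,z)`, or
`(xy)z` always lies in the span of `Q_l(x,y,z)`. -/
def IsSliding (μ : A → A → A) : Prop :=
  (∀ x y z : A, μ z (μ x y) ∈ Submodule.span F (Qrset μ x y z)) ∨
  (∀ x y z : A, μ (μ x y) z ∈ Submodule.span F (Qlset μ x y z))

end

/-!
Suppose `L_k(S) = L_{k+1}(S)`, so that `M = L_k(S)` contains `S` and is stable under
multiplication by elements of `S` on either side. Let `w` be a word, all shorter words being in
`M`. If one of the two factors of `w` is itself a product `xy`, the mixing property rewrites `w`,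
modulo shorter words, as a combination of words of the same length having `x` or `y` as a factor,
which is shorter than `xy`; once a factor is a generator, `w` lies in `M` by stability. Hence
`M = A`: the chain `L_0(S) ≤ L_1(S) ≤ …` is strictly increasing until it reaches `A`, which takes
at most `dim A` steps. A Novikov algebra is mixing because right commutativity turns `(xy)z` into
`(xz)y` and left symmetry expresses `z(xy)` through `x(zy)`, `(xz)y` and `(zx)y`.
-/

theorem apply_finrank_eq_top_of_monotone {K V : Type*} [DivisionRing K] [AddCommGroup V]
    [Module K V] [FiniteDimensional K V] {L : ℕ → Submodule K V} (hL : Monotone L)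
    (hstable : ∀ k, L k = L (k + 1) → L k = ⊤) : L (finrank K V) = ⊤ := by
  have top_of_finrank_eq (k : ℕ) (hk : finrank K (L k) = finrank K (L (k + 1))) : L k = ⊤ :=
    hstable k (Submodule.eq_of_le_of_finrank_eq (hL k.le_succ) hk)
  have finrank_stable (k : ℕ) (hk : finrank K (L k) = finrank K (L (k + 1))) :
      finrank K (L (k + 1)) = finrank K (L (k + 2)) := by
    have htop : L (k + 1) = ⊤ := top_unique (top_of_finrank_eq k hk ▸ hL k.le_succ)
    have htop' : L (k + 2) = ⊤ := top_unique (htop ▸ hL (k + 1).le_succ)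
    rw [htop, htop']
  have finrank_mono : Monotone fun k => finrank K (L k) :=
    fun _ _ h => Submodule.finrank_mono (hL h)
  exact top_of_finrank_eq _ (Nat.stabilises_of_monotone finrank_mono
    (fun k => (L k).finrank_le) finrank_stable (Nat.le_succ _)).symm

section Words

variable {A : Type*} {μ : A → A → A} {S : Set A}

theorem IsWord.one_le {k : ℕ} {w : A} (hw : IsWord μ S k w) : 1 ≤ k := by
  induction hw with
  | base => exact le_rfl
  | mul _ _ iha _ => omega

variable {F : Type*} [Field F] [AddCommGroup A] [Module F A]

theorem IsWord.mem_Lset {k i : ℕ} {w : A} (hw : IsWord μ S k w) (hk : k ≤ i) :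
    w ∈ Lset F μ S i :=
  subset_span ⟨k, hk, hw⟩

theorem Lset_mono : Monotone (Lset F μ S) :=
  fun _ _ h => span_mono fun _ ⟨k, hk, hw⟩ => ⟨k, hk.trans h, hw⟩

namespace IsMixing

variable {M : Submodule F A}

theorem mul_mem_of_isWord (hμ : IsMixing F μ)
    (hmul : ∀ s ∈ S, ∀ a ∈ M, μ s a ∈ M ∧ μ a s ∈ M) {N : ℕ}
    (hshort : ∀ k < N, ∀ w, IsWord μ S k w → w ∈ M) {m n : ℕ} {u v : A}
    (hu : IsWord μ S m u) (hv : IsWord μ S n v) (hN : m + n ≤ N) :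
    μ u v ∈ M ∧ μ v u ∈ M := by
  induction hu generalizing n v with
  | base hs => exact hmul _ hs v (hshort n (by omega) v hv)
  | @mul p q x y hx hy ihx ihy =>
    have hp := hx.one_le
    have hq := hy.one_le
    have hn := hv.one_le
    have hx_yv := ihx (hy.mul hv) (by omega)
    have hx_vy := ihx (hv.mul hy) (by omega)
    have hy_xv := ihy (hx.mul hv) (by omega)
    have hy_vx := ihy (hv.mul hx) (by omega)
    have hP : Pset μ x y v ⊆ M := by
      simp only [Pset, Set.insert_subset_iff, Set.singleton_subset_iff, SetLike.mem_coe]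
      exact ⟨hy_xv.2, hy_vx.2, hx_yv.2, hx_vy.2, hx_vy.1, hx_yv.1, hy_xv.1, hy_vx.1,
        hshort _ (by omega) _ (hx.mul hy), hshort _ (by omega) _ (hy.mul hx),
        hshort _ (by omega) _ (hx.mul hv), hshort _ (by omega) _ (hv.mul hx),
        hshort _ (by omega) _ (hy.mul hv), hshort _ (by omega) _ (hv.mul hy),
        hshort _ (by omega) _ hx, hshort _ (by omega) _ hy, hshort _ (by omega) _ hv⟩
    exact ⟨span_le.mpr hP (hμ x y v).1, span_le.mpr hP (hμ x y v).2⟩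

theorem mem_of_isWord (hμ : IsMixing F μ) (hS : S ⊆ M)
    (hmul : ∀ s ∈ S, ∀ a ∈ M, μ s a ∈ M ∧ μ a s ∈ M) {n : ℕ} {w : A}
    (hw : IsWord μ S n w) : w ∈ M := by
  induction n using Nat.strong_induction_on generalizing w with
  | _ n ih =>
    cases hw with
    | base hs => exact hS hs
    | mul hu hv => exact (hμ.mul_mem_of_isWord hmul (fun k hk _ => ih k hk) hu hv le_rfl).1

theorem eq_top_of_generates (hμ : IsMixing F μ) (hgen : Generates F μ S) (hS : S ⊆ M)
    (hmul : ∀ s ∈ S, ∀ a ∈ M, μ s a ∈ M ∧ μ a s ∈ M) : M = ⊤ :=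
  top_unique (hgen.ge.trans (span_le.mpr fun _ ⟨_, hw⟩ => hμ.mem_of_isWord hS hmul hw))

end IsMixing

end Words

section Algebra

variable {F B : Type*} [Field F] [NonUnitalNonAssocRing B] [Module F B] {S : Set B}

theorem generator_mul_mem_Lset_succ [SMulCommClass F B B] {s x : B} {k : ℕ} (hs : s ∈ S)
    (hx : x ∈ Lset F (amul B) S k) : s * x ∈ Lset F (amul B) S (k + 1) := by
  have hle : Lset F (amul B) S k ≤ (Lset F (amul B) S (k + 1)).comap (LinearMap.mulLeft F s) :=
    span_le.mpr fun _ ⟨_, _, hw⟩ => ((IsWord.base hs).mul hw).mem_Lset (by omega)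
  exact hle hx

theorem mul_generator_mem_Lset_succ [IsScalarTower F B B] {s x : B} {k : ℕ} (hs : s ∈ S)
    (hx : x ∈ Lset F (amul B) S k) : x * s ∈ Lset F (amul B) S (k + 1) := by
  have hle : Lset F (amul B) S k ≤ (Lset F (amul B) S (k + 1)).comap (LinearMap.mulRight F s) :=
    span_le.mpr fun _ ⟨_, _, hw⟩ => (hw.mul (IsWord.base hs)).mem_Lset (by omega)
  exact hle hx

theorem IsMixing.Lset_eq_top_of_eq_succ [SMulCommClass F B B] [IsScalarTower F B B]
    (hB : IsMixing F (amul B)) (hgen : Generates F (amul B) S) {k : ℕ}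
    (hk : Lset F (amul B) S k = Lset F (amul B) S (k + 1)) : Lset F (amul B) S k = ⊤ := by
  refine hB.eq_top_of_generates hgen (fun s hs => ?_) fun s hs a ha => ?_
  · rw [hk]
    exact (IsWord.base hs).mem_Lset (by omega)
  · rw [hk]
    exact ⟨generator_mul_mem_Lset_succ hs ha, mul_generator_mem_Lset_succ hs ha⟩

theorem IsMixing.lenSet_le_finrank [SMulCommClass F B B] [IsScalarTower F B B]
    [FiniteDimensional F B] (hB : IsMixing F (amul B)) (hgen : Generates F (amul B) S) :
    lenSet F (amul B) S ≤ finrank F B :=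
  Nat.sInf_le (apply_finrank_eq_top_of_monotone Lset_mono
    fun _ hk => hB.Lset_eq_top_of_eq_succ hgen hk)

theorem isMixing_of_leftSymmetric_of_rightCommutative
    (left_symm : ∀ x y z : B, x * (y * z) - (x * y) * z = y * (x * z) - (y * x) * z)
    (right_comm : ∀ x y z : B, (x * y) * z = (x * z) * y) : IsMixing F (amul B) := by
  refine fun x y z => ⟨subset_span (.inl (right_comm x y z)), ?_⟩
  have hzxy : z * (x * y) = x * (z * y) - (x * z) * y + (z * x) * y :=
    sub_eq_iff_eq_add.mp (left_symm z x y)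
  change z * (x * y) ∈ _
  rw [hzxy]
  refine add_mem (sub_mem ?_ ?_) ?_ <;> exact subset_span (by simp [Pset, amul])

end Algebra

theorem novikov_isMixing_and_length_le_dim_general
    {F B : Type*} [Field F] [NonUnitalNonAssocRing B] [Module F B]
    [SMulCommClass F B B] [IsScalarTower F B B]
    (left_symm : ∀ x y z : B, x * (y * z) - (x * y) * z = y * (x * z) - (y * x) * z)
    (right_comm : ∀ x y z : B, (x * y) * z = (x * z) * y) :
    IsMixing F (amul B) ∧
    (FiniteDimensional F B → ∀ S : Set B, Generates F (amul B) S →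
      lenSet F (amul B) S ≤ finrank F B) :=
  have hB : IsMixing F (amul B) :=
    isMixing_of_leftSymmetric_of_rightCommutative left_symm right_comm
  ⟨hB, fun _ _ hgen => hB.lenSet_le_finrank hgen⟩

/-- every finite-dimensional Novikov algebra is mixing; consequently every
finite-dimensional Novikov algebra of dimension `d ≥ 2` has length at most `d`. -/
theorem novikov_isMixing_and_length_le_dim
    {F B : Type*} [Field F] [NonUnitalNonAssocRing B] [Module F B]
    [SMulCommClass F B B] [IsScalarTower F B B] [FiniteDimensional F B]
    (h1 : ∀ x y z : B, x * (y * z) - (x * y) * z = y * (x * z) - (y * x) * z)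
    (h2 : ∀ x y z : B, (x * y) * z = (x * z) * y) :
    IsMixing F (amul B) ∧
    (2 ≤ finrank F B →
      ∀ S : Set B, S.Finite → Generates F (amul B) S →
        lenSet F (amul B) S ≤ finrank F B) :=
  have ⟨hB, hlen⟩ := novikov_isMixing_and_length_le_dim_general h1 h2
  ⟨hB, fun _ S _ => hlen inferInstance S⟩
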